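/- arXiv:1607.00606 — 6 statements merged into one kernel-verified Lean document; each statement's English description precedes it below -/
import Mathlib

section
/- Let a, b, c ∈ ℂ and let n be a nonnegative integer. Define θ_n(q) = a + b·q^{2n} + c·q^{−2n} for q ∈ ℂ \ {0}. Then the function q ↦ (θ_n(q)² − 2a·θ_n(q) + (a+b+c)(a−b−c)) / (q + q^{−1}) tends to 2n·i·(c² − b²) as q tends to i within ℂ \ {i} (punctured neighborhood limit). -/
/-!
Put `u = q ^ (2 * n)`. Since `(a + b + c) * (a - b - c) = a ^ 2 - (b + c) ^ 2`, the numerator equals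
`(b * u + c / u) ^ 2 - (b + c) ^ 2 = b ^ 2 * (q ^ (4 * n) - 1) + c ^ 2 * (q ^ (-4 * n) - 1)`
for `q ≠ 0`. It vanishes at `q = I` with derivative `4 * n * I * (c ^ 2 - b ^ 2)`, while `q + q⁻¹`
vanishes there with derivative `2`, so the limit is the quotient of the derivatives.
-/


open Complex Filter

/-- Let a, b, c ∈ ℂ and let n be a nonnegative integer. Define
θ_n(q) = a + b·q^{2n} + c·q^{−2n} for q ∈ ℂ \ {0}. Then the function
q ↦ (θ_n(q)² − 2a·θ_n(q) + (a+b+c)(a−b−c)) / (q + q^{−1}) tends to 2n·i·(c² − b²)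
as q tends to i within ℂ \ {i}. -/
theorem stmt3 (a b c : ℂ) (n : ℕ)
    (θ : ℂ → ℂ)
    (hθ : ∀ q : ℂ, θ q = a + b * q ^ (2 * (n : ℤ)) + c * q ^ (-(2 * (n : ℤ)))) :
    Filter.Tendsto
      (fun q : ℂ => ((θ q) ^ 2 - 2 * a * (θ q) + (a + b + c) * (a - b - c)) / (q + q⁻¹))
      (nhdsWithin Complex.I {Complex.I}ᶜ)
      (nhds (2 * (n : ℂ) * Complex.I * (c ^ 2 - b ^ 2))) := by
  have hI4 : Complex.I ^ (4 * (n : ℤ)) = 1 := by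
    rw [zpow_mul]
    have : Complex.I ^ (4 : ℤ) = 1 := by exact_mod_cast Complex.I_pow_four
    rw [this, one_zpow]
  have hI4' : Complex.I ^ (-(4 * (n : ℤ))) = 1 := by rw [zpow_neg, hI4, inv_one]
  set f : ℂ → ℂ := fun q =>
    b ^ 2 * (q ^ (4 * (n : ℤ)) - 1) + c ^ 2 * (q ^ (-(4 * (n : ℤ))) - 1) with hf
  have hfI : f Complex.I = 0 := by simp only [hf, hI4, hI4']; ring
  have hf' : HasDerivAt f (4 * (n : ℂ) * Complex.I * (c ^ 2 - b ^ 2)) Complex.I := by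
    have h1 := hasDerivAt_zpow (4 * (n : ℤ)) Complex.I (Or.inl Complex.I_ne_zero)
    have h2 := hasDerivAt_zpow (-(4 * (n : ℤ))) Complex.I (Or.inl Complex.I_ne_zero)
    rw [zpow_sub_one₀ Complex.I_ne_zero, hI4, Complex.inv_I] at h1
    rw [zpow_sub_one₀ Complex.I_ne_zero, hI4', Complex.inv_I] at h2
    refine (((h1.sub_const 1).const_mul (b ^ 2)).add
      ((h2.sub_const 1).const_mul (c ^ 2))).congr_deriv ?_
    push_cast
    ring
  have hg' : HasDerivAt (fun q : ℂ => q + q⁻¹) 2 Complex.I := by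
    refine ((hasDerivAt_id Complex.I).add (hasDerivAt_inv Complex.I_ne_zero)).congr_deriv ?_
    rw [Complex.I_sq]
    norm_num
  have hlim := (hasDerivAt_iff_tendsto_slope.mp hf').div (hasDerivAt_iff_tendsto_slope.mp hg')
    two_ne_zero
  have hval : 4 * (n : ℂ) * Complex.I * (c ^ 2 - b ^ 2) / 2
      = 2 * (n : ℂ) * Complex.I * (c ^ 2 - b ^ 2) := by ring
  rw [hval] at hlim
  refine hlim.congr' ?_
  have hne : ∀ᶠ q in nhdsWithin Complex.I {Complex.I}ᶜ, q ≠ 0 :=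
    (isOpen_ne.eventually_mem Complex.I_ne_zero).filter_mono nhdsWithin_le_nhds
  filter_upwards [hne, self_mem_nhdsWithin] with q hq hqI
  have hqI' : q - Complex.I ≠ 0 := sub_ne_zero.mpr hqI
  have hnum : (θ q) ^ 2 - 2 * a * (θ q) + (a + b + c) * (a - b - c) = f q := by
    have e : q ^ (4 * (n : ℤ)) = (q ^ (2 * (n : ℤ))) ^ 2 := by
      rw [sq, ← zpow_add₀ hq]; congr 1; ring
    have hu : q ^ (2 * (n : ℤ)) ≠ 0 := zpow_ne_zero _ hq
    simp only [hf, hθ, zpow_neg, e]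
    field_simp
    ring
  simp only [Pi.div_apply, slope_def_field, hfI, Complex.inv_I, add_neg_cancel, sub_zero, hnum]
  exact div_div_div_cancel_right₀ hqI' _ _
end

section
/- Let K be a field, V a finite-dimensional K-vector space, and A, A* : V → V a tridiagonal pair: (i) A and A* are diagonalizable; (ii) there is an ordering V_0, …, V_d of all eigenspaces of A with A*V_p ⊆ V_{p−1} + V_p + V_{p+1} for 0 ≤ p ≤ d (V_{−1} = V_{d+1} = 0); (iii) there is an ordering V*_0, …, V*_δ of all eigenspaces of A* with A V*_p ⊆ V*_{p−1} + V*_p + V*_{p+1} for 0 ≤ p ≤ δ (V*_{−1} = V*_{δ+1} = 0); (iv) there is no subspace W of V with AW ⊆ W, A*W ⊆ W, W ≠ 0, W ≠ V. Then there exist scalars β, γ, γ*, ρ, ρ* in K such that [A, A²A* − βAA*A + A*A² − γ(AA* + A*A) − ρA*] = 0 and [A*, A*²A − βA*AA* + AA*² − γ*(A*A + AA*) − ρ*A] = 0, where [X,Y] = XY − YX. -/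
/-!
Write `V_p`, `V*_p` for the eigenspaces of `A`, `A*`, ordered as given, and put
`F_i = V*_0 + ⋯ + V*_{i-1}` and `G_i = V_i + ⋯ + V_d`.

Irreducibility enters through the sum of all `F_i ⊓ G_i`. It is stable under `A` and `A*`, because
`A - θ_i` sends `F_i ⊓ G_i` into `F_{i+1} ⊓ G_{i+1}` and `A* - θ*_i` goes back; it lies in the
proper subspace `G_1`, so it is zero (`TDPair.flag_inf_eq_bot`). Three consequences are used:
`d = δ`; the same vanishing for the reversed ordering of the `V_p`; and hence that a nonzero
`v ∈ V*_0` satisfies `A ^ k v ∉ F_k` for all `k ≤ d` (`TDPair.pow_notMem_flag`).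

Since `A*` is block tridiagonal, an identity between operators `∑ f(A) A* g(A)` can be checked on
pairs of adjacent eigenvalues. So interpolation gives a polynomial `p` of degree at most `d` with
`A² A* A - A A* A² = p(A) A* - A* p(A)`. Apply both sides to `v`: the left side lies in `F_4` and
is `(θ*_1 - θ*_2) A³ v` modulo `F_3`, and the top coefficient `c` of `p` contributes
`c (θ*_0 - θ*_k) A ^ k v` on the right, modulo `F_k`. Hence `p` has degree at most 3, and its cubic
coefficient `c` satisfies `c (θ*_0 - θ*_3) = θ*_1 - θ*_2`, so that `c ≠ 0` when `d ≥ 3`. Dividing by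
`c` yields
`θ_i² - β θ_i θ_{i+1} + θ_{i+1}² - γ (θ_i + θ_{i+1}) - ρ = 0` with
`β + 1 = (θ*_0 - θ*_3) / (θ*_1 - θ*_2)` (`TDPair.exists_adjacent`), which is the first tridiagonal
relation. These scalar equations also give `β + 1 = (θ_0 - θ_3) / (θ_1 - θ_2)`, so the dual
relation has the same `β`. When `d ≤ 2` one takes `β = -1` and expresses the cubic power of each
operator through lower powers.
-/

section TridiagonalPair

open Polynomial

variable {K : Type*} [Field K] {V : Type*} [AddCommGroup V] [Module K V]

/-! ### Flags of eigenspaces -/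

/-- The sum of the eigenspaces `V_k` of `A` for the eigenvalues `θ k`, over those `k ≤ d` that
satisfy `P`. -/
def eigenFlag (A : Module.End K V) (d : ℕ) (θ : ℕ → K) (P : ℕ → Prop) : Submodule K V :=
  ⨆ k, ⨆ (_ : k ≤ d ∧ P k), A.eigenspace (θ k)

/-- One half of the definition of a tridiagonal pair: `A` is diagonalizable with distinct
eigenvalues `θ 0, …, θ d`, and `B` is block tridiagonal for this ordering. The last condition is
stated as: `B` maps `V_p` into every subspace that contains the `V_q` with `q ≤ d` and
`|p - q| ≤ 1`. -/
structure HalfTD (A B : Module.End K V) (d : ℕ) (θ : ℕ → K) : Prop where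
  inj : ∀ p q : ℕ, p ≤ d → q ≤ d → p ≠ q → θ p ≠ θ q
  eig : ∀ p : ℕ, p ≤ d → A.eigenspace (θ p) ≠ ⊥
  top : eigenFlag A d θ (fun _ => True) = ⊤
  tri : ∀ p : ℕ, p ≤ d → ∀ S : Submodule K V,
    (∀ q, q ≤ d → q ≤ p + 1 → p ≤ q + 1 → A.eigenspace (θ q) ≤ S) →
    ∀ v ∈ A.eigenspace (θ p), B v ∈ S

/-- A tridiagonal pair with chosen orderings of the eigenvalues of `A` and of `B = A*`. -/
structure TDPair (A B : Module.End K V) (d δ : ℕ) (θ θs : ℕ → K) : Prop where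
  left : HalfTD A B d θ
  right : HalfTD B A δ θs
  irr : ∀ W : Submodule K V, (∀ v ∈ W, A v ∈ W) → (∀ v ∈ W, B v ∈ W) → W = ⊥ ∨ W = ⊤

variable {A B : Module.End K V} {d δ : ℕ} {θ θs : ℕ → K}

lemma eigenspace_le_eigenFlag {P : ℕ → Prop} {k : ℕ} (hk : k ≤ d) (hP : P k) :
    A.eigenspace (θ k) ≤ eigenFlag A d θ P :=
  le_iSup₂_of_le k ⟨hk, hP⟩ le_rfl

lemma eigenFlag_le {P : ℕ → Prop} {S : Submodule K V}
    (h : ∀ k, k ≤ d → P k → A.eigenspace (θ k) ≤ S) : eigenFlag A d θ P ≤ S :=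
  iSup₂_le fun k hk => h k hk.1 hk.2

lemma eigenFlag_mono {P Q : ℕ → Prop} (h : ∀ k, k ≤ d → P k → Q k) :
    eigenFlag A d θ P ≤ eigenFlag A d θ Q :=
  eigenFlag_le fun k hk hP => eigenspace_le_eigenFlag hk (h k hk hP)

lemma TDPair.symm (h : TDPair A B d δ θ θs) : TDPair B A δ d θs θ :=
  ⟨h.right, h.left, fun W h1 h2 => h.irr W h2 h1⟩

/-- The other operator moves a flag by at most one step. -/
lemma HalfTD.map_flag (h : HalfTD A B d θ) {P Q : ℕ → Prop}
    (hPQ : ∀ p q, P p → q ≤ p + 1 → p ≤ q + 1 → Q q) {x : V} (hx : x ∈ eigenFlag A d θ P) :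
    B x ∈ eigenFlag A d θ Q := by
  have : eigenFlag A d θ P ≤ (eigenFlag A d θ Q).comap B :=
    eigenFlag_le fun k hk hP v hv =>
      h.tri k hk _ (fun q hq h1 h2 => eigenspace_le_eigenFlag hq (hPQ k q hP h1 h2)) v hv
  exact this hx

/-- `A - θ m` removes `V_m` from a flag. -/
lemma sub_smul_mem_flag {P Q : ℕ → Prop} {m : ℕ} (hPQ : ∀ p, P p → p ≠ m → Q p) {x : V}
    (hx : x ∈ eigenFlag A d θ P) : A x - θ m • x ∈ eigenFlag A d θ Q := by
  have : eigenFlag A d θ P ≤ (eigenFlag A d θ Q).comap (A - θ m • (1 : Module.End K V)) := by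
    refine eigenFlag_le fun k hk hP v hv => ?_
    have hv' := Module.End.mem_eigenspace_iff.1 hv
    simp only [Submodule.mem_comap, LinearMap.sub_apply, LinearMap.smul_apply,
      Module.End.one_apply, hv']
    by_cases hkm : k = m
    · subst hkm; simp
    · have := eigenspace_le_eigenFlag (A := A) (θ := θ) (P := Q) hk (hPQ k hP hkm) hv
      exact sub_mem (Submodule.smul_mem _ _ this) (Submodule.smul_mem _ _ this)
  simpa using this hx

lemma HalfTD.flag_one_ne_top (h : HalfTD A B d θ) [FiniteDimensional K V] :
    eigenFlag A d θ (fun k => 1 ≤ k) ≠ ⊤ := by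
  intro htop
  have hle : eigenFlag A d θ (fun k => 1 ≤ k) ≤
      LinearMap.range (A - θ 0 • (1 : Module.End K V)) := by
    refine eigenFlag_le fun k hk hP v hv => ?_
    have hv' := Module.End.mem_eigenspace_iff.1 hv
    have hne : θ k - θ 0 ≠ 0 := sub_ne_zero.2 (h.inj k 0 hk (Nat.zero_le _) (by omega))
    refine ⟨(θ k - θ 0)⁻¹ • v, ?_⟩
    simp only [map_smul, LinearMap.sub_apply, LinearMap.smul_apply, Module.End.one_apply, hv']
    rw [← sub_smul, smul_smul, inv_mul_cancel₀ hne, one_smul]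
  rw [htop, top_le_iff, LinearMap.range_eq_top] at hle
  have hinj := LinearMap.injective_iff_surjective.2 hle
  apply h.eig 0 (Nat.zero_le _)
  rw [eq_bot_iff]
  intro v hv
  have hv' := Module.End.mem_eigenspace_iff.1 hv
  exact hinj (by simp [hv'])

/-! ### Consequences of irreducibility -/

/-- The sum of the subspaces `F_i ⊓ G_i` is invariant and proper, so each of them vanishes. -/
lemma TDPair.flag_inf_eq_bot [FiniteDimensional K V] (h : TDPair A B d δ θ θs) (i : ℕ) :
    eigenFlag B δ θs (fun k => k < i) ⊓ eigenFlag A d θ (fun k => i ≤ k) = ⊥ := by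
  set W : Submodule K V := ⨆ i : ℕ,
    eigenFlag B δ θs (fun k => k < i) ⊓ eigenFlag A d θ (fun k => i ≤ k) with hW
  have hmem : ∀ (i : ℕ) (x : V), x ∈ eigenFlag B δ θs (fun k => k < i) →
      x ∈ eigenFlag A d θ (fun k => i ≤ k) → x ∈ W := fun i x h1 h2 =>
    (le_iSup (fun i : ℕ => eigenFlag B δ θs (fun k => k < i) ⊓
      eigenFlag A d θ (fun k => i ≤ k)) i) ⟨h1, h2⟩
  have h0 : ∀ x : V, x ∈ eigenFlag B δ θs (fun k => k < 0) → x = 0 := by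
    intro x hx
    have : eigenFlag B δ θs (fun k => k < 0) ≤ ⊥ := eigenFlag_le fun k _ hk => by omega
    simpa using this hx
  have hA : W ≤ W.comap A := by
    refine iSup_le fun i x hx => ?_
    obtain ⟨h1, h2⟩ := hx
    have e : A x = (A x - θ i • x) + θ i • x := by abel
    rw [Submodule.mem_comap, e]
    refine add_mem (hmem (i + 1) _ ?_ ?_) (Submodule.smul_mem _ _ (hmem i x h1 h2))
    · exact sub_mem (h.right.map_flag (fun p q hp h3 h4 => by omega) h1)
        (Submodule.smul_mem _ _ (eigenFlag_mono (fun k _ hk => by omega) h1))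
    · exact sub_smul_mem_flag (fun p hp hpi => by omega) h2
  have hB : W ≤ W.comap B := by
    refine iSup_le fun i x hx => ?_
    obtain ⟨h1, h2⟩ := hx
    rcases i with _ | i
    · rw [h0 x h1]; exact zero_mem _
    have e : B x = (B x - θs i • x) + θs i • x := by abel
    rw [Submodule.mem_comap, e]
    refine add_mem (hmem i _ ?_ ?_) (Submodule.smul_mem _ _ (hmem (i + 1) x h1 h2))
    · exact sub_smul_mem_flag (fun p hp hpi => by omega) h1
    · exact sub_mem (h.left.map_flag (fun p q hp h3 h4 => by omega) h2)
        (Submodule.smul_mem _ _ (eigenFlag_mono (fun k _ hk => by omega) h2))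
  have hWle : W ≤ eigenFlag A d θ (fun k => 1 ≤ k) := by
    refine iSup_le fun i x hx => ?_
    obtain ⟨h1, h2⟩ := hx
    rcases i with _ | i
    · rw [h0 x h1]; exact zero_mem _
    · exact eigenFlag_mono (fun k _ hk => by omega) h2
  have hbot : W = ⊥ := by
    refine (h.irr W hA hB).resolve_right fun ht => h.left.flag_one_ne_top ?_
    rwa [ht, top_le_iff] at hWle
  rw [eq_bot_iff, ← hbot]
  exact fun x hx => hmem i x hx.1 hx.2

lemma TDPair.le [FiniteDimensional K V] (h : TDPair A B d δ θ θs) : d ≤ δ := by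
  by_contra hlt
  apply h.left.eig d le_rfl
  rw [eq_bot_iff, ← h.flag_inf_eq_bot d]
  refine le_inf ?_ (eigenspace_le_eigenFlag le_rfl le_rfl)
  refine le_top.trans (h.right.top.ge.trans (eigenFlag_mono fun k hk _ => by omega))

lemma HalfTD.reverse (h : HalfTD A B d θ) : HalfTD A B d (fun k => θ (d - k)) where
  inj p q hp hq hpq := h.inj _ _ (by omega) (by omega) (by omega)
  eig p hp := h.eig _ (by omega)
  top := by
    rw [← top_le_iff, ← h.top]
    refine eigenFlag_le fun k hk _ => ?_
    have := eigenspace_le_eigenFlag (A := A) (d := d) (θ := fun k => θ (d - k))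
      (P := fun _ => True) (k := d - k) (by omega) trivial
    simpa [Nat.sub_sub_self hk] using this
  tri p hp S hS v hv := by
    refine h.tri (d - p) (by omega) S (fun q hq h1 h2 => ?_) v hv
    have := hS (d - q) (by omega) (by omega) (by omega)
    simpa [Nat.sub_sub_self hq] using this

/-- The operator `(A - θ (k-1)) ⋯ (A - θ 0)`. -/
def shiftProd (A : Module.End K V) (θ : ℕ → K) : ℕ → Module.End K V
  | 0 => 1
  | k + 1 => (A - θ k • (1 : Module.End K V)) * shiftProd A θ k

lemma shiftProd_succ_apply (k : ℕ) (v : V) :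
    shiftProd A θ (k + 1) v = A (shiftProd A θ k v) - θ k • shiftProd A θ k v := by
  simp [shiftProd]

lemma shiftProd_eigen {m : ℕ} {w : V} (hw : A w = θ m • w) (k : ℕ) :
    shiftProd A θ k w = (∏ i ∈ Finset.range k, (θ m - θ i)) • w := by
  induction k with
  | zero => simp [shiftProd]
  | succ k ih =>
    rw [shiftProd_succ_apply, ih, map_smul, hw, Finset.prod_range_succ]
    module

/-- Powers of `A` climb the flag `F_i` one step at a time. -/
lemma TDPair.pow_mem_flag (h : TDPair A B d δ θ θs) {v : V} (hv : v ∈ B.eigenspace (θs 0))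
    (k : ℕ) : (A ^ k) v ∈ eigenFlag B δ θs (fun j => j < k + 1) := by
  induction k with
  | zero => exact eigenspace_le_eigenFlag (Nat.zero_le _) (by omega) hv
  | succ k ih =>
    rw [pow_succ', Module.End.mul_apply]
    exact h.right.map_flag (fun p q hp h3 h4 => by omega) ih

/-- Modulo `F_k`, the vector `A ^ k v` equals `(A - θ (k-1)) ⋯ (A - θ 0) v ∈ G_k`. If both were in
`F_k` the latter would vanish, placing `v` in `V_0 + ⋯ + V_{d-1}`; this meets `V*_0` trivially by
the reversed ordering. -/
lemma TDPair.pow_notMem_flag [FiniteDimensional K V] (h : TDPair A B d δ θ θs) {v : V}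
    (hv : v ∈ B.eigenspace (θs 0)) (hv0 : v ≠ 0) {k : ℕ} (hk : k ≤ d) :
    (A ^ k) v ∉ eigenFlag B δ θs (fun j => j < k) := by
  intro hmem
  have hdiff : ∀ k, shiftProd A θ k v - (A ^ k) v ∈ eigenFlag B δ θs (fun j => j < k) := by
    intro k
    induction k with
    | zero => simp [shiftProd]
    | succ k ih =>
      have h1 : shiftProd A θ k v ∈ eigenFlag B δ θs (fun j => j < k + 1) := by
        have := add_mem (eigenFlag_mono (Q := fun j => j < k + 1) (fun j _ hj => by omega) ih)
          (h.pow_mem_flag hv k)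
        simpa using this
      have h2 := h.right.map_flag (Q := fun j => j < k + 1) (fun p q hp h3 h4 => by omega) ih
      have e : shiftProd A θ (k + 1) v - (A ^ (k + 1)) v
          = A (shiftProd A θ k v - (A ^ k) v) - θ k • shiftProd A θ k v := by
        rw [shiftProd_succ_apply, pow_succ', Module.End.mul_apply, map_sub]; abel
      rw [e]
      exact sub_mem h2 (Submodule.smul_mem _ _ h1)
  have hG : ∀ k, shiftProd A θ k v ∈ eigenFlag A d θ (fun j => k ≤ j) := by
    intro k
    induction k with
    | zero =>
      have : v ∈ eigenFlag A d θ (fun _ => True) := by rw [h.left.top]; trivial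
      exact eigenFlag_mono (fun j _ _ => Nat.zero_le j) this
    | succ k ih =>
      rw [shiftProd_succ_apply]
      exact sub_smul_mem_flag (fun p hp hpi => by omega) ih
  have hF : shiftProd A θ k v ∈ eigenFlag B δ θs (fun j => j < k) := by
    simpa using add_mem (hdiff k) hmem
  have hzero : shiftProd A θ k v = 0 := by
    have : shiftProd A θ k v ∈ eigenFlag B δ θs (fun k_1 => k_1 < k) ⊓
      eigenFlag A d θ (fun j => k ≤ j) := ⟨hF, hG k⟩
    rw [h.flag_inf_eq_bot k] at this
    simpa using this
  have hzd : shiftProd A θ d v = 0 := by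
    refine Nat.le_induction hzero (fun n _ ih => ?_) d hk
    rw [shiftProd_succ_apply, ih]; simp
  have hsup : (⊤ : Submodule K V) ≤
      eigenFlag A d θ (fun j => j < d) ⊔ A.eigenspace (θ d) := by
    rw [← h.left.top]
    refine eigenFlag_le fun j hj _ => ?_
    rcases hj.lt_or_eq with hj' | rfl
    · exact (eigenspace_le_eigenFlag (P := fun j => j < d) hj hj').trans le_sup_left
    · exact le_sup_right
  obtain ⟨g, hg, w, hw, hgw⟩ := Submodule.mem_sup.1 (hsup (Submodule.mem_top (x := v)))
  have hg0 : shiftProd A θ d g = 0 := by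
    have : eigenFlag A d θ (fun j => j < d) ≤ LinearMap.ker (shiftProd A θ d) := by
      refine eigenFlag_le fun j hj hjd u hu => ?_
      rw [LinearMap.mem_ker, shiftProd_eigen (Module.End.mem_eigenspace_iff.1 hu),
        Finset.prod_eq_zero (Finset.mem_range.2 hjd) (sub_self _), zero_smul]
    exact this hg
  have hw0 : w = 0 := by
    rw [← hgw, map_add, hg0, zero_add, shiftProd_eigen (Module.End.mem_eigenspace_iff.1 hw)] at hzd
    refine (smul_eq_zero.1 hzd).resolve_left (Finset.prod_ne_zero_iff.2 fun i hi => ?_)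
    have hi' := Finset.mem_range.1 hi
    exact sub_ne_zero.2 (h.left.inj d i le_rfl (by omega) (by omega))
  have hvg : v ∈ eigenFlag A d θ (fun j => j < d) := by
    rw [← hgw, hw0, add_zero]; exact hg
  have hrev : TDPair A B d δ (fun k => θ (d - k)) θs := ⟨h.left.reverse, h.right, h.irr⟩
  have hvr : v ∈ eigenFlag A d (fun k => θ (d - k)) (fun j => 1 ≤ j) := by
    have : eigenFlag A d θ (fun j => j < d) ≤
        eigenFlag A d (fun k => θ (d - k)) (fun j => 1 ≤ j) := by
      refine eigenFlag_le fun j hj hjd => ?_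
      have := eigenspace_le_eigenFlag (A := A) (d := d) (θ := fun k => θ (d - k))
        (P := fun j => 1 ≤ j) (k := d - j) (by omega) (by omega)
      simpa [Nat.sub_sub_self hj] using this
    exact this hvg
  have hbot : v ∈ eigenFlag B δ θs (fun j => j < 1) ⊓
      eigenFlag A d (fun k => θ (d - k)) (fun j => 1 ≤ j) :=
    ⟨eigenspace_le_eigenFlag (Nat.zero_le _) Nat.one_pos hv, hvr⟩
  rw [hrev.flag_inf_eq_bot 1] at hbot
  exact hv0 (by simpa using hbot)

/-! ### Operator identities from adjacent eigenvalues -/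

/-- Operators that agree on each eigenspace of `A` are equal. -/
lemma HalfTD.ext_eigen (h : HalfTD A B d θ) {S T : Module.End K V}
    (hST : ∀ p, p ≤ d → ∀ v, A v = θ p • v → S v = T v) : S = T := by
  have : (⊤ : Submodule K V) ≤ LinearMap.eqLocus S T := by
    rw [← h.top]
    exact eigenFlag_le fun k hk _ v hv => hST k hk v (Module.End.mem_eigenspace_iff.1 hv)
  ext v
  exact this (Submodule.mem_top (x := v))

/-- The tridiagonal relation holds as soon as the symmetric polynomial
`x² - β x y + y² - γ (x + y) - ρ` vanishes at every pair of adjacent eigenvalues. -/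
lemma HalfTD.relation (h : HalfTD A B d θ) (β γ ρ : K)
    (hadj : ∀ i, i < d → θ i ^ 2 - β * θ i * θ (i + 1) + θ (i + 1) ^ 2
      - γ * (θ i + θ (i + 1)) - ρ = 0) :
    A * (A ^ 2 * B - β • (A * B * A) + B * A ^ 2 - γ • (A * B + B * A) - ρ • B)
      - (A ^ 2 * B - β • (A * B * A) + B * A ^ 2 - γ • (A * B + B * A) - ρ • B) * A = 0 := by
  refine h.ext_eigen fun p hp v hv => ?_
  -- On `V_p` the left side is `T ∘ B` for the polynomial `T` in `A` below.
  set t := θ p with ht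
  let T : Module.End K V := (A - t • (1 : Module.End K V)) *
    (A ^ 2 - (β * t) • A + (t ^ 2) • (1 : Module.End K V) - γ • (A + t • (1 : Module.End K V))
      - ρ • (1 : Module.End K V))
  have hT : B v ∈ LinearMap.ker T := by
    refine h.tri p hp _ (fun q hq h1 h2 w hw => ?_) v (Module.End.mem_eigenspace_iff.2 hv)
    have hw' := Module.End.mem_eigenspace_iff.1 hw
    have key : (θ q - t) * (θ q ^ 2 - β * t * θ q + t ^ 2 - γ * (θ q + t) - ρ) = 0 := by
      rcases (by omega : q = p ∨ q = p + 1 ∨ p = q + 1) with rfl | rfl | rfl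
      · simp [ht]
      · have := hadj p (by omega)
        rw [← ht] at this
        linear_combination (θ (p + 1) - t) * this
      · have := hadj q (by omega)
        rw [← ht] at this
        linear_combination (θ q - t) * this
    have e : T w = ((θ q - t) * (θ q ^ 2 - β * t * θ q + t ^ 2 - γ * (θ q + t) - ρ)) • w := by
      simp only [T, Module.End.mul_apply, LinearMap.sub_apply, LinearMap.add_apply,
        LinearMap.smul_apply, Module.End.one_apply, pow_two, hw', map_sub, map_add, map_smul]
      module
    rw [LinearMap.mem_ker, e, key, zero_smul]
  rw [LinearMap.mem_ker] at hT
  rw [LinearMap.zero_apply, ← hT]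
  simp only [T, Module.End.mul_apply, LinearMap.sub_apply, LinearMap.add_apply,
    LinearMap.smul_apply, Module.End.one_apply, pow_two, hv, map_sub, map_add, map_smul]
  module

lemma aeval_eigen {q : ℕ} {w : V} (hw : A w = θ q • w) (p : K[X]) :
    aeval A p w = p.eval (θ q) • w :=
  Module.End.aeval_apply_of_mem_apply_eq_smul hw

/-- Interpolating the partial sums of `θ i θ (i+1) (θ (i+1) - θ i)` at the eigenvalues gives a
polynomial `p` with `A² B A - A B A² = p(A) B - B p(A)`. -/
lemma HalfTD.exists_poly (h : HalfTD A B d θ) : ∃ p : K[X], p.natDegree ≤ d ∧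
    (∀ i, i < d → p.eval (θ (i + 1)) - p.eval (θ i) =
      θ i * θ (i + 1) * (θ (i + 1) - θ i)) ∧
    A ^ 2 * B * A - A * B * A ^ 2 = aeval A p * B - B * aeval A p := by
  classical
  let r : ℕ → K := fun n => ∑ i ∈ Finset.range n, θ i * θ (i + 1) * (θ (i + 1) - θ i)
  have hinj : Set.InjOn θ (Finset.range (d + 1) : Finset ℕ) := by
    intro a ha b hb hab
    simp only [Finset.coe_range, Set.mem_Iio] at ha hb
    by_contra hne
    exact h.inj a b (by omega) (by omega) hne hab
  let p := Lagrange.interpolate (Finset.range (d + 1)) θ r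
  have heval : ∀ i, i ≤ d → p.eval (θ i) = r i := fun i hi =>
    Lagrange.eval_interpolate_at_node r hinj (Finset.mem_range.2 (by omega))
  have hadj : ∀ i, i < d → p.eval (θ (i + 1)) - p.eval (θ i) =
      θ i * θ (i + 1) * (θ (i + 1) - θ i) := by
    intro i hi
    rw [heval _ (by omega), heval _ (by omega)]
    simp only [r, Finset.sum_range_succ]
    ring
  refine ⟨p, ?_, hadj, ?_⟩
  · have := Lagrange.degree_interpolate_le r hinj
    rw [Finset.card_range, Nat.add_sub_cancel] at this
    exact natDegree_le_of_degree_le this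
  · refine h.ext_eigen fun j hj v hv => ?_
    set t := θ j with ht
    let T : Module.End K V := t • A ^ 2 - t ^ 2 • A
      - (aeval A p - p.eval t • (1 : Module.End K V))
    have hT : B v ∈ LinearMap.ker T := by
      refine h.tri j hj _ (fun q hq h1 h2 w hw => ?_) v (Module.End.mem_eigenspace_iff.2 hv)
      have hw' := Module.End.mem_eigenspace_iff.1 hw
      have key : t * θ q ^ 2 - t ^ 2 * θ q - (p.eval (θ q) - p.eval t) = 0 := by
        rcases (by omega : q = j ∨ q = j + 1 ∨ j = q + 1) with rfl | rfl | rfl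
        · rw [ht]; ring
        · have := hadj j (by omega)
          rw [← ht] at this
          linear_combination -this
        · have := hadj q (by omega)
          rw [← ht] at this
          linear_combination this
      have e : T w = (t * θ q ^ 2 - t ^ 2 * θ q - (p.eval (θ q) - p.eval t)) • w := by
        simp only [T, Module.End.mul_apply, LinearMap.sub_apply,
          LinearMap.smul_apply, Module.End.one_apply, pow_two, hw', map_smul, aeval_eigen hw']
        module
      rw [LinearMap.mem_ker, e, key, zero_smul]
    rw [LinearMap.mem_ker] at hT
    have hpv : aeval A p v = p.eval t • v := aeval_eigen hv p
    rw [← sub_eq_zero, ← hT]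
    simp only [T, Module.End.mul_apply, LinearMap.sub_apply, hpv,
      LinearMap.smul_apply, Module.End.one_apply, pow_two, hv, map_smul]
    module

/-! ### The degree bound and the common value of `β` -/

/-- Only the top coefficient of `p` matters for `(B - θs 0) p(A) v` modulo `F_k`. -/
lemma TDPair.top_coeff (h : TDPair A B d δ θ θs) {v : V} (hv : v ∈ B.eigenspace (θs 0))
    {p : K[X]} {k : ℕ} (hp : p.natDegree ≤ k) :
    B (aeval A p v) - θs 0 • aeval A p v - (p.coeff k * (θs k - θs 0)) • (A ^ k) v
      ∈ eigenFlag B δ θs (fun j => j < k) := by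
  have hlow : ∑ i ∈ Finset.range k, p.coeff i • (A ^ i) v ∈
      eigenFlag B δ θs (fun j => j < k) :=
    sum_mem fun i hi => Submodule.smul_mem _ _
      (eigenFlag_mono (fun j _ hj => by have := Finset.mem_range.1 hi; omega)
        (h.pow_mem_flag hv i))
  have hexp : aeval A p v =
      (∑ i ∈ Finset.range k, p.coeff i • (A ^ i) v) + p.coeff k • (A ^ k) v := by
    rw [aeval_eq_sum_range' (Nat.lt_succ_of_le hp), LinearMap.sum_apply, Finset.sum_range_succ]
    simp
  set f := ∑ i ∈ Finset.range k, p.coeff i • (A ^ i) v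
  have h1 : B f - θs 0 • f ∈ eigenFlag B δ θs (fun j => j < k) :=
    sub_smul_mem_flag (fun p hp _ => hp) hlow
  have h2 : B ((A ^ k) v) - θs k • (A ^ k) v ∈ eigenFlag B δ θs (fun j => j < k) :=
    sub_smul_mem_flag (fun p hp _ => by omega) (h.pow_mem_flag hv k)
  have e : B (aeval A p v) - θs 0 • aeval A p v - (p.coeff k * (θs k - θs 0)) • (A ^ k) v
      = (B f - θs 0 • f) + p.coeff k • (B ((A ^ k) v) - θs k • (A ^ k) v) := by
    rw [hexp, map_add, map_smul]
    module
  rw [e]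
  exact add_mem h1 (Submodule.smul_mem _ _ h2)

/-- Modulo `F_3`, the vector `(A² B A - A B A²) v` is `(θs 1 - θs 2) A³ v`. -/
lemma TDPair.cubic_term (h : TDPair A B d δ θ θs) {v : V} (hv : v ∈ B.eigenspace (θs 0)) :
    (A ^ 2 * B * A - A * B * A ^ 2) v - (θs 1 - θs 2) • (A ^ 3) v
      ∈ eigenFlag B δ θs (fun j => j < 3) := by
  have h1 : B ((A ^ 1) v) - θs 1 • (A ^ 1) v ∈ eigenFlag B δ θs (fun j => j < 1) :=
    sub_smul_mem_flag (fun p hp _ => by omega) (h.pow_mem_flag hv 1)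
  have h2 : B ((A ^ 2) v) - θs 2 • (A ^ 2) v ∈ eigenFlag B δ θs (fun j => j < 2) :=
    sub_smul_mem_flag (fun p hp _ => by omega) (h.pow_mem_flag hv 2)
  have hA1 := h.right.map_flag (Q := fun j => j < 3) (fun p q hp h3 h4 => by omega)
    (h.right.map_flag (Q := fun j => j < 2) (fun p q hp h3 h4 => by omega) h1)
  have hA2 := h.right.map_flag (Q := fun j => j < 3) (fun p q hp h3 h4 => by omega) h2
  have e : (A ^ 2 * B * A - A * B * A ^ 2) v - (θs 1 - θs 2) • (A ^ 3) v
      = A (A (B ((A ^ 1) v) - θs 1 • (A ^ 1) v)) - A (B ((A ^ 2) v) - θs 2 • (A ^ 2) v) := by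
    simp only [pow_succ, pow_zero, one_mul, Module.End.mul_apply, LinearMap.sub_apply, map_sub,
      map_smul]
    module
  rw [e]
  exact sub_mem hA1 hA2

/-- The scalar form of the first tridiagonal relation. The value of `β` is expressed through the
eigenvalues of the other operator, which links the two relations. -/
lemma TDPair.exists_adjacent [FiniteDimensional K V] (h : TDPair A B d d θ θs) (hd : 3 ≤ d) :
    ∃ γ ρ : K, ∀ i, i < d →
      θ i ^ 2 - ((θs 0 - θs 3) / (θs 1 - θs 2) - 1) * θ i * θ (i + 1) + θ (i + 1) ^ 2
        - γ * (θ i + θ (i + 1)) - ρ = 0 := by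
  obtain ⟨v, hv, hv0⟩ := Submodule.exists_mem_ne_zero_of_ne_bot (h.right.eig 0 (Nat.zero_le _))
  obtain ⟨p, hpd, hadj, hop⟩ := h.left.exists_poly
  have hv' := Module.End.mem_eigenspace_iff.1 hv
  have hopv : (A ^ 2 * B * A - A * B * A ^ 2) v = -(B (aeval A p v) - θs 0 • aeval A p v) := by
    rw [hop]
    simp [hv']
  have hcub := h.cubic_term hv
  have hsub : ∀ i, 0 < i → i ≤ d → θs i - θs 0 ≠ 0 := fun i h1 h2 =>
    sub_ne_zero.2 (h.right.inj i 0 h2 (Nat.zero_le _) (by omega))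
  have hdeg : p.natDegree ≤ 3 := by
    by_contra hlt
    set k := p.natDegree with hk
    have htop := h.top_coeff hv (p := p) (k := k) le_rfl
    have hlhs : (A ^ 2 * B * A - A * B * A ^ 2) v ∈ eigenFlag B d θs (fun j => j < k) := by
      have h3 := add_mem (eigenFlag_mono (Q := fun j => j < k) (fun j _ hj => by omega) hcub)
        (Submodule.smul_mem _ (θs 1 - θs 2)
          (eigenFlag_mono (Q := fun j => j < k) (fun j _ hj => by omega) (h.pow_mem_flag hv 3)))
      simpa using h3
    rw [hopv] at hlhs
    have h4 := add_mem hlhs htop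
    have e : -(B (aeval A p v) - θs 0 • aeval A p v) + (B (aeval A p v) - θs 0 • aeval A p v
        - (p.coeff k * (θs k - θs 0)) • (A ^ k) v)
        = (-(p.coeff k * (θs k - θs 0))) • (A ^ k) v := by module
    rw [e] at h4
    refine h.pow_notMem_flag hv hv0 hpd ((Submodule.smul_mem_iff _ ?_).1 h4)
    refine neg_ne_zero.2 (mul_ne_zero ?_ (hsub k (by omega) hpd))
    have : p ≠ 0 := by rintro rfl; simp at hk; omega
    simpa [hk] using this
  have hc : p.coeff 3 * (θs 0 - θs 3) = θs 1 - θs 2 := by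
    have h4 := add_mem hcub (h.top_coeff hv hdeg)
    rw [hopv] at h4
    have e : -(B (aeval A p v) - θs 0 • aeval A p v) - (θs 1 - θs 2) • (A ^ 3) v
        + (B (aeval A p v) - θs 0 • aeval A p v - (p.coeff 3 * (θs 3 - θs 0)) • (A ^ 3) v)
        = (p.coeff 3 * (θs 0 - θs 3) - (θs 1 - θs 2)) • (A ^ 3) v := by module
    rw [e] at h4
    by_contra hne
    exact h.pow_notMem_flag hv hv0 hd ((Submodule.smul_mem_iff _ (sub_ne_zero.2 hne)).1 h4)
  have h12 : θs 1 - θs 2 ≠ 0 := sub_ne_zero.2 (h.right.inj 1 2 (by omega) (by omega) (by omega))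
  set c := p.coeff 3 with hcdef
  have hc0 : c ≠ 0 := by
    rintro h0
    rw [h0, zero_mul] at hc
    exact h12 hc.symm
  have hβ : (θs 0 - θs 3) / (θs 1 - θs 2) = c⁻¹ := by
    rw [div_eq_iff h12, ← hc, inv_mul_cancel_left₀ hc0]
  refine ⟨-p.coeff 2 / c, -p.coeff 1 / c, fun i hi => ?_⟩
  have hstep := hadj i hi
  simp only [eval_eq_sum_range' (Nat.lt_succ_of_le hdeg), Finset.sum_range_succ,
    Finset.sum_range_zero, ← hcdef] at hstep
  have hne : θ (i + 1) - θ i ≠ 0 :=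
    sub_ne_zero.2 (h.left.inj _ _ (by omega) (by omega) (by omega))
  rw [hβ]
  have hcc : c * c⁻¹ = 1 := mul_inv_cancel₀ hc0
  refine (mul_eq_zero.1 (?_ : (c * (θ (i + 1) - θ i)) * _ = 0)).resolve_left
    (mul_ne_zero hc0 hne)
  field_simp
  linear_combination hstep

/-- The recurrence for adjacent eigenvalues determines `β` from the first four eigenvalues. -/
lemma HalfTD.ratio (h : HalfTD A B d θ) (hd : 3 ≤ d) {b γ ρ : K}
    (hadj : ∀ i, i < d → θ i ^ 2 - (b - 1) * θ i * θ (i + 1) + θ (i + 1) ^ 2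
      - γ * (θ i + θ (i + 1)) - ρ = 0) :
    (θ 0 - θ 3) / (θ 1 - θ 2) = b := by
  have h12 : θ 1 - θ 2 ≠ 0 := sub_ne_zero.2 (h.inj 1 2 (by omega) (by omega) (by omega))
  have h02 : θ 0 - θ 2 ≠ 0 := sub_ne_zero.2 (h.inj 0 2 (by omega) (by omega) (by omega))
  have h13 : θ 1 - θ 3 ≠ 0 := sub_ne_zero.2 (h.inj 1 3 (by omega) (by omega) (by omega))
  have e0 := hadj 0 (by omega)
  have e1 := hadj 1 (by omega)
  have e2 := hadj 2 (by omega)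
  norm_num at e0 e1 e2
  have r1 : θ 0 - (b - 1) * θ 1 + θ 2 - γ = 0 := by
    refine (mul_eq_zero.1 (?_ : (θ 0 - θ 2) * _ = 0)).resolve_left h02
    linear_combination e0 - e1
  have r2 : θ 1 - (b - 1) * θ 2 + θ 3 - γ = 0 := by
    refine (mul_eq_zero.1 (?_ : (θ 1 - θ 3) * _ = 0)).resolve_left h13
    linear_combination e1 - e2
  rw [div_eq_iff h12]
  linear_combination r1 - r2

/-- With at most three eigenvalues, `β = -1` works: `A³` is a combination of `A²`, `A` and `1`. -/
lemma HalfTD.relation_small (h : HalfTD A B d θ) (hd : d ≤ 2) : ∃ γ ρ : K,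
    A * (A ^ 2 * B - (-1 : K) • (A * B * A) + B * A ^ 2 - γ • (A * B + B * A) - ρ • B)
      - (A ^ 2 * B - (-1 : K) • (A * B * A) + B * A ^ 2 - γ • (A * B + B * A) - ρ • B) * A
      = 0 := by
  refine ⟨θ 0 + θ 1 + θ 2, -(θ 0 * θ 1 + θ 0 * θ 2 + θ 1 * θ 2),
    h.relation _ _ _ fun i hi => ?_⟩
  rcases (by omega : i = 0 ∨ i = 1) with rfl | rfl <;> norm_num <;> ring

lemma HalfTD.of_eigenspaces
    (hinj : ∀ p q : ℕ, p ≤ d → q ≤ d → p ≠ q → θ p ≠ θ q)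
    (heig : ∀ p : ℕ, p ≤ d → A.eigenspace (θ p) ≠ ⊥)
    (hall : ∀ μ : K, A.eigenspace μ ≠ ⊥ → ∃ p, p ≤ d ∧ μ = θ p)
    (hdiag : (⨆ μ : K, A.eigenspace μ) = ⊤)
    (htri : ∀ p : ℕ, p ≤ d → Submodule.map B (A.eigenspace (θ p)) ≤
      (if p = 0 then ⊥ else A.eigenspace (θ (p - 1))) ⊔ A.eigenspace (θ p) ⊔
        (if p = d then ⊥ else A.eigenspace (θ (p + 1)))) : HalfTD A B d θ where
  inj := hinj
  eig := heig
  top := by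
    rw [← top_le_iff, ← hdiag]
    refine iSup_le fun μ => ?_
    by_cases hμ : A.eigenspace μ = ⊥
    · rw [hμ]; exact bot_le
    · obtain ⟨p, hp, rfl⟩ := hall μ hμ
      exact eigenspace_le_eigenFlag hp trivial
  tri p hp S hS v hv := by
    refine (htri p hp).trans (sup_le (sup_le ?_ ?_) ?_) (Submodule.mem_map_of_mem hv)
    · split_ifs with h0
      · exact bot_le
      · exact hS _ (by omega) (by omega) (by omega)
    · exact hS _ hp (by omega) (by omega)
    · split_ifs with h0
      · exact bot_le
      · exact hS _ (by omega) (by omega) (by omega)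

end TridiagonalPair


/-- Let K be a field, V a finite-dimensional K-vector space, and
A, A* : V → V a tridiagonal pair: (i) A and A* are diagonalizable; (ii) there is an
ordering V_0, …, V_d of all eigenspaces of A with A*V_p ⊆ V_{p−1} + V_p + V_{p+1}
(V_{−1} = V_{d+1} = 0); (iii) there is an ordering V*_0, …, V*_δ of all eigenspaces of
A* with A V*_p ⊆ V*_{p−1} + V*_p + V*_{p+1} (V*_{−1} = V*_{δ+1} = 0); (iv) there is no
subspace W of V with AW ⊆ W, A*W ⊆ W, W ≠ 0, W ≠ V. Then there exist scalars
β, γ, γ*, ρ, ρ* in K such that [A, A²A* − βAA*A + A*A² − γ(AA* + A*A) − ρA*] = 0 and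
[A*, A*²A − βA*AA* + AA*² − γ*(A*A + AA*) − ρ*A] = 0. -/
theorem stmt12 (K : Type*) [Field K] (V : Type*) [AddCommGroup V] [Module K V]
    [FiniteDimensional K V]
    (A As : Module.End K V)
    (d δ : ℕ) (θ θs : ℕ → K)
    -- the V_p = eigenspace(θ p), p = 0, …, d, are pairwise distinct nonzero eigenspaces
    (hθinj : ∀ p q : ℕ, p ≤ d → q ≤ d → p ≠ q → θ p ≠ θ q)
    (hθeig : ∀ p : ℕ, p ≤ d → A.eigenspace (θ p) ≠ ⊥)
    -- they exhaust all eigenspaces of A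
    (hθall : ∀ μ : K, A.eigenspace μ ≠ ⊥ → ∃ p, p ≤ d ∧ μ = θ p)
    -- (i) A is diagonalizable
    (hdiag : (⨆ μ : K, A.eigenspace μ) = ⊤)
    -- (ii) A* acts block tridiagonally on the ordering V_0, …, V_d
    (htri : ∀ p : ℕ, p ≤ d → Submodule.map As (A.eigenspace (θ p)) ≤
      (if p = 0 then ⊥ else A.eigenspace (θ (p - 1))) ⊔ A.eigenspace (θ p) ⊔
        (if p = d then ⊥ else A.eigenspace (θ (p + 1))))
    -- the V*_p = eigenspace(θ* p), p = 0, …, δ, are pairwise distinct nonzero eigenspaces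
    (hθsinj : ∀ p q : ℕ, p ≤ δ → q ≤ δ → p ≠ q → θs p ≠ θs q)
    (hθseig : ∀ p : ℕ, p ≤ δ → As.eigenspace (θs p) ≠ ⊥)
    (hθsall : ∀ μ : K, As.eigenspace μ ≠ ⊥ → ∃ p, p ≤ δ ∧ μ = θs p)
    -- (i) A* is diagonalizable
    (hdiags : (⨆ μ : K, As.eigenspace μ) = ⊤)
    -- (iii) A acts block tridiagonally on the ordering V*_0, …, V*_δ
    (htris : ∀ p : ℕ, p ≤ δ → Submodule.map A (As.eigenspace (θs p)) ≤
      (if p = 0 then ⊥ else As.eigenspace (θs (p - 1))) ⊔ As.eigenspace (θs p) ⊔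
        (if p = δ then ⊥ else As.eigenspace (θs (p + 1))))
    -- (iv) irreducibility
    (hirr : ∀ W : Submodule K V, (∀ v ∈ W, A v ∈ W) → (∀ v ∈ W, As v ∈ W) →
      W = ⊥ ∨ W = ⊤) :
    ∃ β γ γs ρ ρs : K,
      (A * (A ^ 2 * As - β • (A * As * A) + As * A ^ 2 - γ • (A * As + As * A) - ρ • As)
        - (A ^ 2 * As - β • (A * As * A) + As * A ^ 2 - γ • (A * As + As * A) - ρ • As) * A
        = 0) ∧
      (As * (As ^ 2 * A - β • (As * A * As) + A * As ^ 2 - γs • (As * A + A * As) - ρs • A)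
        - (As ^ 2 * A - β • (As * A * As) + A * As ^ 2 - γs • (As * A + A * As) - ρs • A) * As
        = 0) := by
  have h : TDPair A As d δ θ θs :=
    ⟨.of_eigenspaces hθinj hθeig hθall hdiag htri,
      .of_eigenspaces hθsinj hθseig hθsall hdiags htris, hirr⟩
  obtain rfl : d = δ := le_antisymm h.le h.symm.le
  rcases Nat.lt_or_ge d 3 with hd | hd
  · obtain ⟨γ, ρ, h1⟩ := h.left.relation_small (by omega)
    obtain ⟨γs, ρs, h2⟩ := h.right.relation_small (by omega)
    exact ⟨-1, γ, γs, ρ, ρs, h1, h2⟩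
  · obtain ⟨γ, ρ, h1⟩ := h.exists_adjacent hd
    obtain ⟨γs, ρs, h2⟩ := h.symm.exists_adjacent hd
    -- Both relations have the same `β`.
    rw [h.left.ratio hd h1] at h2
    exact ⟨_, γ, γs, ρ, ρs, h.left.relation _ _ _ h1, h.right.relation _ _ _ h2⟩
end

section
/- Let A be a unital associative ℂ-algebra and κ₁, κ₂, r ∈ A, and δ₁, δ₃, δ₄, δ₅ ∈ ℂ such that: κ₁r = rκ₁; κ₂r + rκ₂ = 2δ₃·1; r² = 1; κ₁²κ₂ − 2κ₁κ₂κ₁ + κ₂κ₁² = (1/2)(κ₁κ₂ + κ₂κ₁) − δ₃κ₁r + δ₁κ₂ − δ₁δ₃r; and κ₂²κ₁ − 2κ₂κ₁κ₂ + κ₁κ₂² = (1/2)κ₂² + 2δ₃κ₁r + 2δ₃(κ₁κ₂ − κ₂κ₁)r + κ₁ + δ₄r + δ₅·1. Then κ₁ and κ₂ satisfy: (1) [κ₁, κ₁²κ₂ − 2κ₁κ₂κ₁ + κ₂κ₁² − (1/2)(κ₁κ₂ + κ₂κ₁) − δ₁κ₂] = 0, and (2) [κ₂, κ₂⁴κ₁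 − 2κ₂²κ₁κ₂² + κ₁κ₂⁴ + κ₂³κ₁ − κ₂²κ₁κ₂ − κ₂κ₁κ₂² + κ₁κ₂³ − κ₂²κ₁ − 2κ₂κ₁κ₂ − κ₁κ₂² − κ₂κ₁ − κ₁κ₂] = 0, where [X,Y] = XY − YX. -/
/-!
The first relation holds because `h4` identifies the second argument of the commutator with
`-δ₃ κ₁ r - δ₁ δ₃ r`, and `κ₁` commutes with `r`.

For the second, write `L`, `R` for left and right multiplication by `κ₂`. The second argument
of the commutator factors as `(L + R) (L + R + 1) ((L - R)² - 1) κ₁`. Relation `h5` says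
`((L - R)² - 1) κ₁ = κ₂² / 2 + 2 δ₃ Y r + δ₄ r + δ₅` with `Y = κ₁ + [κ₁, κ₂]`. The twisted
commutation `κ₂ r = 2 δ₃ - r κ₂` gives
`(L + R + 1) (Y r) = -(((L - R)² - 1) κ₁) r + 2 δ₃ Y`, and substituting `h5` once more with
`r² = 1` makes the `Y` terms cancel, leaving `-κ₂² r / 2 - δ₄ - δ₅ r`. As `L + R` sends `r` and
`κ₂² r` to polynomials in `κ₂`, the whole expression is a polynomial in `κ₂`, so it
commutes with `κ₂`.
-/

/-- The factorization `(L + R) (L + R + 1) ((L - R)² - 1) a`, with `L`, `R` left and right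
multiplication by `b`. -/
theorem factor_aux {A : Type*} [Ring A] (a b E F : A)
    (hE : b ^ 2 * a - 2 * (b * a * b) + a * b ^ 2 = E + a) (hF : F = b * E + E * b + E) :
    b ^ 4 * a - 2 * (b ^ 2 * a * b ^ 2) + a * b ^ 4
          + b ^ 3 * a - b ^ 2 * a * b - b * a * b ^ 2 + a * b ^ 3
          - b ^ 2 * a - 2 * (b * a * b) - a * b ^ 2 - b * a - a * b = b * F + F * b := by
  have hE' : E = b ^ 2 * a - 2 * (b * a * b) + a * b ^ 2 - a := by rw [hE]; abel
  rw [hF, hE']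
  noncomm_ring

/-- The value of `(L + R + 1) (Y r)`, where `Y = a + [a, b]`. -/
theorem twist_aux {A : Type*} [Ring A] [Algebra ℂ A] (a b r E : A) (d : ℂ)
    (h2 : b * r + r * b = (2 * d) • (1 : A))
    (hE : b ^ 2 * a - 2 * (b * a * b) + a * b ^ 2 = E + a) :
    b * ((a + (a * b - b * a)) * r) + (a + (a * b - b * a)) * r * b
        + (a + (a * b - b * a)) * r
      = (2 * d) • (a + (a * b - b * a)) - E * r := by
  have hE' : E = b ^ 2 * a - 2 * (b * a * b) + a * b ^ 2 - a := by rw [hE]; abel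
  have h : (a + (a * b - b * a)) * (b * r + r * b)
      = (2 * d) • (a + (a * b - b * a)) := by rw [h2, mul_smul_comm, mul_one]
  rw [← h, hE']
  noncomm_ring

/-- Let A be a unital associative ℂ-algebra and κ₁, κ₂, r ∈ A, and
δ₁, δ₃, δ₄, δ₅ ∈ ℂ satisfying the defining relations of the complementary Bannai–Ito
algebra with δ₂ = 0. Then κ₁ and κ₂ satisfy the two displayed commutator relations of
the non-symmetric generalization of the tridiagonal algebra. -/
theorem stmt14 (A : Type*) [Ring A] [Algebra ℂ A]
    (κ₁ κ₂ r : A) (δ₁ δ₃ δ₄ δ₅ : ℂ)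
    (h1 : κ₁ * r = r * κ₁)
    (h2 : κ₂ * r + r * κ₂ = (2 * δ₃) • (1 : A))
    (h3 : r ^ 2 = 1)
    (h4 : κ₁ ^ 2 * κ₂ - 2 * (κ₁ * κ₂ * κ₁) + κ₂ * κ₁ ^ 2
        = (1 / 2 : ℂ) • (κ₁ * κ₂ + κ₂ * κ₁) - δ₃ • (κ₁ * r) + δ₁ • κ₂ - (δ₁ * δ₃) • r)
    (h5 : κ₂ ^ 2 * κ₁ - 2 * (κ₂ * κ₁ * κ₂) + κ₁ * κ₂ ^ 2
        = (1 / 2 : ℂ) • (κ₂ ^ 2) + (2 * δ₃) • (κ₁ * r)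
          + (2 * δ₃) • ((κ₁ * κ₂ - κ₂ * κ₁) * r) + κ₁ + δ₄ • r + δ₅ • (1 : A)) :
    (κ₁ * (κ₁ ^ 2 * κ₂ - 2 * (κ₁ * κ₂ * κ₁) + κ₂ * κ₁ ^ 2
          - (1 / 2 : ℂ) • (κ₁ * κ₂ + κ₂ * κ₁) - δ₁ • κ₂)
      - (κ₁ ^ 2 * κ₂ - 2 * (κ₁ * κ₂ * κ₁) + κ₂ * κ₁ ^ 2
          - (1 / 2 : ℂ) • (κ₁ * κ₂ + κ₂ * κ₁) - δ₁ • κ₂) * κ₁ = 0) ∧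
    (κ₂ * (κ₂ ^ 4 * κ₁ - 2 * (κ₂ ^ 2 * κ₁ * κ₂ ^ 2) + κ₁ * κ₂ ^ 4
          + κ₂ ^ 3 * κ₁ - κ₂ ^ 2 * κ₁ * κ₂ - κ₂ * κ₁ * κ₂ ^ 2 + κ₁ * κ₂ ^ 3
          - κ₂ ^ 2 * κ₁ - 2 * (κ₂ * κ₁ * κ₂) - κ₁ * κ₂ ^ 2 - κ₂ * κ₁ - κ₁ * κ₂)
      - (κ₂ ^ 4 * κ₁ - 2 * (κ₂ ^ 2 * κ₁ * κ₂ ^ 2) + κ₁ * κ₂ ^ 4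
          + κ₂ ^ 3 * κ₁ - κ₂ ^ 2 * κ₁ * κ₂ - κ₂ * κ₁ * κ₂ ^ 2 + κ₁ * κ₂ ^ 3
          - κ₂ ^ 2 * κ₁ - 2 * (κ₂ * κ₁ * κ₂) - κ₁ * κ₂ ^ 2 - κ₂ * κ₁ - κ₁ * κ₂) * κ₂
      = 0) := by
  constructor
  · have e : κ₁ ^ 2 * κ₂ - 2 * (κ₁ * κ₂ * κ₁) + κ₂ * κ₁ ^ 2
        - (1 / 2 : ℂ) • (κ₁ * κ₂ + κ₂ * κ₁) - δ₁ • κ₂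
        = -(δ₃ • (κ₁ * r)) - (δ₁ * δ₃) • r := by rw [h4]; abel
    rw [e]
    simp only [mul_sub, sub_mul, mul_neg, neg_mul, mul_smul_comm, smul_mul_assoc, mul_assoc, ← h1]
    abel
  · obtain ⟨Y, hY⟩ : ∃ Y, Y = κ₁ + (κ₁ * κ₂ - κ₂ * κ₁) := ⟨_, rfl⟩
    obtain ⟨E, hE⟩ : ∃ E, E = (1 / 2 : ℂ) • (κ₂ ^ 2) + (2 * δ₃) • (Y * r)
        + δ₄ • r + δ₅ • (1 : A) := ⟨_, rfl⟩
    have hP : κ₂ ^ 2 * κ₁ - 2 * (κ₂ * κ₁ * κ₂) + κ₁ * κ₂ ^ 2 = E + κ₁ := by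
      rw [h5, hE, hY, add_mul, smul_add]; abel
    have hT := twist_aux κ₁ κ₂ r E δ₃ h2 hP
    rw [← hY] at hT
    have hrr : r * r = 1 := by rw [← sq, h3]
    -- The `Y` terms cancel here because `Y r r = Y`.
    have hEr : E * r = (1 / 2 : ℂ) • (κ₂ ^ 2 * r) + (2 * δ₃) • Y + δ₄ • (1 : A) + δ₅ • r := by
      rw [hE]
      simp only [add_mul, smul_mul_assoc, mul_assoc, hrr, mul_one, one_mul]
    have hYr : κ₂ * (Y * r) + Y * r * κ₂ + Y * r
        = -((1 / 2 : ℂ) • (κ₂ ^ 2 * r) + δ₄ • (1 : A) + δ₅ • r) := by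
      rw [hT, hEr]; abel
    have hF : κ₂ * E + E * κ₂ + E = κ₂ ^ 3 + (1 / 2 : ℂ) • κ₂ ^ 2
        + (2 * δ₃) • (-((1 / 2 : ℂ) • (κ₂ ^ 2 * r) + δ₄ • (1 : A) + δ₅ • r))
        + δ₄ • ((2 * δ₃) • (1 : A)) + δ₄ • r + (2 * δ₅) • κ₂ + δ₅ • (1 : A) := by
      rw [← hYr, ← h2, hE]
      simp only [mul_add, add_mul, mul_smul_comm, smul_mul_assoc, pow_succ, pow_zero, mul_assoc,
        mul_one, one_mul]
      module
    have hr : r * κ₂ = (2 * δ₃) • (1 : A) - κ₂ * r := by rw [← h2]; abel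
    have hb : κ₂ ^ 2 * r * κ₂ = (2 * δ₃) • κ₂ ^ 2 - κ₂ ^ 3 * r := by
      rw [mul_assoc, hr, mul_sub, mul_smul_comm, mul_one, ← mul_assoc, ← pow_succ]
    obtain ⟨F, hF'⟩ : ∃ F, F = κ₂ * E + E * κ₂ + E := ⟨_, rfl⟩
    have hQ : κ₂ * F + F * κ₂ = (2 : ℂ) • κ₂ ^ 4 + κ₂ ^ 3
        - (2 * δ₃ * δ₃) • κ₂ ^ 2 + (4 * δ₅) • κ₂ ^ 2 + (2 * δ₅) • κ₂
        + (2 * δ₃ * δ₄ - 4 * δ₃ * δ₃ * δ₅) • (1 : A) := by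
      have hb' : κ₂ * (κ₂ ^ 2 * r) = κ₂ ^ 3 * r := by rw [← mul_assoc, ← pow_succ']
      rw [hF', hF]
      simp only [mul_add, add_mul, mul_neg, neg_mul, mul_smul_comm, smul_mul_assoc, hb, hb', hr,
        mul_one, one_mul, ← pow_succ, ← pow_succ', ← sq]
      module
    rw [factor_aux κ₁ κ₂ E F hP hF', hQ]
    simp only [mul_add, add_mul, mul_sub, sub_mul, mul_smul_comm, smul_mul_assoc, mul_one,
      one_mul, ← pow_succ, ← pow_succ', ← sq, sub_self]
end

section
/- Let A be a unital associative ℂ-algebra and κ₁, κ₂, r ∈ A, and γ₁, γ₃, γ₄, γ₅ ∈ ℂ such that: κ₁r = rκ₁; κ₂r + rκ₂ = 2γ₃·1; r² = 1; κ₁²κ₂ − 2κ₁κ₂κ₁ + κ₂κ₁² = γ₁κ₂ − γ₁γ₃·1; and κ₂²κ₁ − 2κ₂κ₁κ₂ + κ₁κ₂² = 2γ₃κ₁r + 2γ₃(κ₁κ₂ − κ₂κ₁)r + κ₁ + γ₄r + γ₅·1. Then κ₁ and κ₂ satisfy: (1) [κ₁, κ₁²κ₂ − 2κ₁κ₂κ₁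 + κ₂κ₁² − γ₁κ₂] = 0, and (2) [κ₂, κ₂⁴κ₁ − 2κ₂²κ₁κ₂² + κ₁κ₂⁴ + κ₂³κ₁ − κ₂²κ₁κ₂ − κ₂κ₁κ₂² + κ₁κ₂³ − κ₂²κ₁ − 2κ₂κ₁κ₂ − κ₁κ₂² − κ₂κ₁ − κ₁κ₂] = 0, where [X,Y] = XY − YX. -/
/-!
Write `x` and `y` for left and right multiplication by `κ₂`, two commuting operators on `A`. The second
relation is `(x - y) (x + y) (x + y + 1) ((x - y)² - 1) κ₁ = 0`. By `h5`, the element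
`E = ((x - y)² - 1) κ₁` equals `2γ₃ W r + γ₄ r + γ₅` with `W = (1 - (x - y)) κ₁`. The relation `h2`
gives `(x + y) (W r) = ((x - y) W) r + 2γ₃ W`, so, as `(1 + (x - y)) W = -E`, all terms in `W` cancel in
`(x + y + 1) E`, leaving `(γ₄ - 2γ₃γ₅) r + γ₅ (2κ₂ + 1)`. Applying `x + y` once more gives a
polynomial in `κ₂` alone, because `(x + y) r = 2γ₃`, and this commutes with `κ₂`.
The first relation holds because the bracketed element is a scalar by `h4`.
-/

/-- Let A be a unital associative ℂ-algebra and κ₁, κ₂, r ∈ A, and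
γ₁, γ₃, γ₄, γ₅ ∈ ℂ satisfying the defining relations of the dual −1 Hahn algebra with
γ₂ = 0. Then κ₁ and κ₂ satisfy the two displayed commutator relations of the
non-symmetric generalization of the tridiagonal algebra (with γ = 0). -/
theorem stmt15 (A : Type*) [Ring A] [Algebra ℂ A]
    (κ₁ κ₂ r : A) (γ₁ γ₃ γ₄ γ₅ : ℂ)
    (h1 : κ₁ * r = r * κ₁)
    (h2 : κ₂ * r + r * κ₂ = (2 * γ₃) • (1 : A))
    (h3 : r ^ 2 = 1)
    (h4 : κ₁ ^ 2 * κ₂ - 2 * (κ₁ * κ₂ * κ₁) + κ₂ * κ₁ ^ 2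
        = γ₁ • κ₂ - (γ₁ * γ₃) • (1 : A))
    (h5 : κ₂ ^ 2 * κ₁ - 2 * (κ₂ * κ₁ * κ₂) + κ₁ * κ₂ ^ 2
        = (2 * γ₃) • (κ₁ * r) + (2 * γ₃) • ((κ₁ * κ₂ - κ₂ * κ₁) * r)
          + κ₁ + γ₄ • r + γ₅ • (1 : A)) :
    (κ₁ * (κ₁ ^ 2 * κ₂ - 2 * (κ₁ * κ₂ * κ₁) + κ₂ * κ₁ ^ 2 - γ₁ • κ₂)
      - (κ₁ ^ 2 * κ₂ - 2 * (κ₁ * κ₂ * κ₁) + κ₂ * κ₁ ^ 2 - γ₁ • κ₂) * κ₁ = 0) ∧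
    (κ₂ * (κ₂ ^ 4 * κ₁ - 2 * (κ₂ ^ 2 * κ₁ * κ₂ ^ 2) + κ₁ * κ₂ ^ 4
          + κ₂ ^ 3 * κ₁ - κ₂ ^ 2 * κ₁ * κ₂ - κ₂ * κ₁ * κ₂ ^ 2 + κ₁ * κ₂ ^ 3
          - κ₂ ^ 2 * κ₁ - 2 * (κ₂ * κ₁ * κ₂) - κ₁ * κ₂ ^ 2 - κ₂ * κ₁ - κ₁ * κ₂)
      - (κ₂ ^ 4 * κ₁ - 2 * (κ₂ ^ 2 * κ₁ * κ₂ ^ 2) + κ₁ * κ₂ ^ 4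
          + κ₂ ^ 3 * κ₁ - κ₂ ^ 2 * κ₁ * κ₂ - κ₂ * κ₁ * κ₂ ^ 2 + κ₁ * κ₂ ^ 3
          - κ₂ ^ 2 * κ₁ - 2 * (κ₂ * κ₁ * κ₂) - κ₁ * κ₂ ^ 2 - κ₂ * κ₁ - κ₁ * κ₂) * κ₂
      = 0) := by
  refine ⟨?_, ?_⟩
  · have h : κ₁ ^ 2 * κ₂ - 2 * (κ₁ * κ₂ * κ₁) + κ₂ * κ₁ ^ 2 - γ₁ • κ₂ = -((γ₁ * γ₃) • (1 : A)) := by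
      rw [h4]; abel
    rw [h]; simp
  · obtain ⟨W, hW⟩ : ∃ W, W = κ₁ - (κ₂ * κ₁ - κ₁ * κ₂) := ⟨_, rfl⟩
    obtain ⟨E, hE⟩ : ∃ E, E = κ₂ ^ 2 * κ₁ - 2 * (κ₂ * κ₁ * κ₂) + κ₁ * κ₂ ^ 2 - κ₁ := ⟨_, rfl⟩
    have hEW : E = (2 * γ₃) • (W * r) + γ₄ • r + γ₅ • (1 : A) := by
      have hWr : W * r = κ₁ * r + (κ₁ * κ₂ - κ₂ * κ₁) * r := by rw [hW]; noncomm_ring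
      rw [hE, h5, hWr, smul_add]; abel
    have hWE : W + (κ₂ * W - W * κ₂) = -E := by
      rw [hW, hE]; noncomm_ring
    have hEr : E * r = (2 * γ₃) • W + γ₄ • (1 : A) + γ₅ • r := by
      rw [hEW]
      simp only [add_mul, smul_mul_assoc, mul_assoc, ← pow_two, h3, mul_one, one_mul]
    have hxy : κ₂ * (W * r) + W * r * κ₂ + W * r = (2 * γ₃) • W - E * r := by
      have hr : r * κ₂ = (2 * γ₃) • (1 : A) - κ₂ * r := by rw [← h2]; abel
      have hWr : W * r * κ₂ = (2 * γ₃) • W - W * κ₂ * r := by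
        rw [mul_assoc, hr, mul_sub, mul_smul_comm, mul_one, mul_assoc]
      have hEr' : E * r = -((W + (κ₂ * W - W * κ₂)) * r) := by rw [hWE]; simp
      rw [hWr, hEr']; noncomm_ring
    have hF : κ₂ * E + E * κ₂ + E = (γ₄ - 2 * γ₃ * γ₅) • r + γ₅ • (2 * κ₂ + 1) := by
      have e : κ₂ * E + E * κ₂ + E
          = (2 * γ₃) • (κ₂ * (W * r) + W * r * κ₂ + W * r) + γ₄ • (κ₂ * r + r * κ₂ + r)
            + γ₅ • (2 * κ₂ + 1) := by
        rw [hEW]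
        simp only [mul_add, add_mul, mul_smul_comm, smul_mul_assoc, mul_one, one_mul, two_mul]
        module
      rw [e, hxy, hEr, h2]
      module
    have hG : κ₂ * (κ₂ * E + E * κ₂ + E) + (κ₂ * E + E * κ₂ + E) * κ₂
        = (γ₄ - 2 * γ₃ * γ₅) • ((2 * γ₃) • (1 : A)) + γ₅ • (4 * κ₂ ^ 2 + 2 * κ₂) := by
      have e : 4 * κ₂ ^ 2 + 2 * κ₂ = κ₂ * (2 * κ₂ + 1) + (2 * κ₂ + 1) * κ₂ := by noncomm_ring
      rw [hF, ← h2, e]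
      simp only [mul_add, add_mul, mul_smul_comm, smul_mul_assoc, smul_add]
      abel
    have hP : κ₂ ^ 4 * κ₁ - 2 * (κ₂ ^ 2 * κ₁ * κ₂ ^ 2) + κ₁ * κ₂ ^ 4
          + κ₂ ^ 3 * κ₁ - κ₂ ^ 2 * κ₁ * κ₂ - κ₂ * κ₁ * κ₂ ^ 2 + κ₁ * κ₂ ^ 3
          - κ₂ ^ 2 * κ₁ - 2 * (κ₂ * κ₁ * κ₂) - κ₁ * κ₂ ^ 2 - κ₂ * κ₁ - κ₁ * κ₂
        = κ₂ * (κ₂ * E + E * κ₂ + E) + (κ₂ * E + E * κ₂ + E) * κ₂ := by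
      rw [hE]; noncomm_ring
    have hc : κ₂ * (4 * κ₂ ^ 2 + 2 * κ₂) = (4 * κ₂ ^ 2 + 2 * κ₂) * κ₂ := by noncomm_ring
    rw [hP, hG, mul_add, add_mul]
    simp only [mul_smul_comm, smul_mul_assoc, mul_one, one_mul, hc, sub_self]
end

section
/- Let K = ℂ(q) be the field of rational functions in one variable q over ℂ. Let A₊ ∈ M₈(K) be the matrix whose rows are: (q³, q², q, 0, 1, 0, 0, 0), (q², q, 0, q, 0, 1, 0, 0), (q, 0, q, 1, 0, 0, 1, 0), (0, q, 1, q⁻¹, 0, 0, 0, 1), (1, 0, 0, 0, q, 1, q⁻¹, 0), (0, 1, 0, 0, 1, q⁻¹, 0, q⁻¹), (0, 0, 1, 0, q⁻¹, 0, q⁻¹, q⁻²), (0, 0, 0, 1, 0, q⁻¹, q⁻², q⁻³), and let A₋ be the matrix obtained from A₊ by replacing q by q⁻¹ in every entry. Then the only K-subspaces W of K⁸ satisfying A₊·W ⊆ W and A₋·W ⊆ W are W = 0 and W = K⁸. -/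
/-!
Write `q³A₊`, `q³A₋` as polynomial matrices `plusMat q`, `minusMat q`; both are symmetric.
`A₊` is diagonalisable with spectrum `[4], [2], 0, -[2]` of multiplicities `1, 3, 3, 1`, where
`[n] = (qⁿ - q⁻ⁿ) / (q - q⁻¹)`. The simple eigenvalue `[4]` has the product eigenvector
`v = (q³, 1) ⊗ (q², 1) ⊗ (q, 1)`, so `A₊ (A₊² - [2]²)` is a nonzero multiple of `v vᵀ`
(`plusMat_cubic`).

The vector `v` is cyclic (`eq_top_of_topVec_mem`): eight words in the two matrices applied to `v`
are linearly independent, because their determinant is an integer polynomial in `q` which is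
nonzero modulo `7` at `q = 2`.

Let `W` be invariant. If some `w ∈ W` has `v ⬝ᵥ w ≠ 0`, the rank-one operator above puts `v` in
`W`, so `W` is everything. Otherwise `v` lies in the orthogonal complement of `W` for the bilinear
form `⬝ᵥ`; by symmetry of the matrices that complement is invariant, hence everything, and `W = 0`.
-/

open Matrix Polynomial

/-- The matrix `x³ A₊(x)`; the scaling makes its entries polynomial in `x`. -/
def plusMat {R : Type*} [CommRing R] (x : R) : Matrix (Fin 8) (Fin 8) R :=
  !![x^6, x^5, x^4, 0,   x^3, 0,   0,   0;
     x^5, x^4, 0,   x^4, 0,   x^3, 0,   0;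
     x^4, 0,   x^4, x^3, 0,   0,   x^3, 0;
     0,   x^4, x^3, x^2, 0,   0,   0,   x^3;
     x^3, 0,   0,   0,   x^4, x^3, x^2, 0;
     0,   x^3, 0,   0,   x^3, x^2, 0,   x^2;
     0,   0,   x^3, 0,   x^2, 0,   x^2, x;
     0,   0,   0,   x^3, 0,   x^2, x,   1]

/-- The matrix `x³ A₋(x)`; the scaling makes its entries polynomial in `x`. -/
def minusMat {R : Type*} [CommRing R] (x : R) : Matrix (Fin 8) (Fin 8) R :=
  !![1,   x,   x^2, 0,   x^3, 0,   0,   0;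
     x,   x^2, 0,   x^2, 0,   x^3, 0,   0;
     x^2, 0,   x^2, x^3, 0,   0,   x^3, 0;
     0,   x^2, x^3, x^4, 0,   0,   0,   x^3;
     x^3, 0,   0,   0,   x^2, x^3, x^4, 0;
     0,   x^3, 0,   0,   x^3, x^4, 0,   x^4;
     0,   0,   x^3, 0,   x^4, 0,   x^4, x^5;
     0,   0,   0,   x^3, 0,   x^4, x^5, x^6]

/-- The vector `(x³, 1) ⊗ (x², 1) ⊗ (x, 1)`, an eigenvector of `A₊(x)` for its simple
eigenvalue `[4]`. -/
def topVec {R : Type*} [CommRing R] (x : R) : Fin 8 → R :=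
  ![x^6, x^5, x^4, x^3, x^3, x^2, x, 1]

/-- Eight words in `A = plusMat x` and `B = minusMat x` applied to `v = topVec x`:
`v, Bv, B²v, AB²v, BAB²v, B²AB²v, ABAB²v, BABAB²v`. -/
def wordVec {R : Type*} [CommRing R] (x : R) : Fin 8 → Fin 8 → R :=
  let v := topVec x
  let b := minusMat x *ᵥ v
  let bb := minusMat x *ᵥ b
  let abb := plusMat x *ᵥ bb
  let babb := minusMat x *ᵥ abb
  let ababb := plusMat x *ᵥ babb
  ![v, b, bb, abb, babb, minusMat x *ᵥ babb, ababb, minusMat x *ᵥ ababb]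

section Map

variable {R S : Type*} [CommRing R] [CommRing S] (f : R →+* S) (x : R)

lemma plusMat_map : (plusMat x).map f = plusMat (f x) := by
  ext i j; fin_cases i <;> fin_cases j <;> simp [plusMat]

lemma minusMat_map : (minusMat x).map f = minusMat (f x) := by
  ext i j; fin_cases i <;> fin_cases j <;> simp [minusMat]

lemma topVec_map : f ∘ topVec x = topVec (f x) := by
  ext i; fin_cases i <;> simp [topVec]

lemma comp_mulVec (M : Matrix (Fin 8) (Fin 8) R) (v : Fin 8 → R) :
    f ∘ (M *ᵥ v) = M.map f *ᵥ (f ∘ v) :=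
  funext fun i => RingHom.map_mulVec f M v i

lemma wordVec_map : (Matrix.of (wordVec x)).map f = Matrix.of (wordVec (f x)) := by
  have key : ∀ i, f ∘ wordVec x i = wordVec (f x) i := by
    intro i
    fin_cases i <;>
      simp [wordVec, comp_mulVec, plusMat_map, minusMat_map, topVec_map]
  ext i j
  exact congrFun (key i) j

end Map

lemma plusMat_transpose {R : Type*} [CommRing R] (x : R) : (plusMat x)ᵀ = plusMat x := by
  ext i j; fin_cases i <;> fin_cases j <;> rfl

lemma minusMat_transpose {R : Type*} [CommRing R] (x : R) : (minusMat x)ᵀ = minusMat x := by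
  ext i j; fin_cases i <;> fin_cases j <;> rfl

set_option maxHeartbeats 2000000 in
/-- The cubic `A₊ (A₊² - [2]²)` kills every eigenspace of `A₊` except the line through `topVec`,
so it is a multiple of the projection onto that line (here multiplied through by `x⁹`). -/
lemma plusMat_cubic {R : Type*} [CommRing R] (x : R) :
    plusMat x * (plusMat x * plusMat x - (x^4 * (x^2 + 1)^2) • (1 : Matrix (Fin 8) (Fin 8) R)) =
      ((x^2 + 1) * (x^4 + x^2 + 1)) • vecMulVec (topVec x) (topVec x) := by
  ext i j
  simp only [Matrix.mul_apply, Matrix.sub_apply, Matrix.smul_apply, vecMulVec_apply,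
    Fin.sum_univ_eight, smul_eq_mul, Matrix.one_apply]
  fin_cases i <;> fin_cases j <;> simp [plusMat, topVec] <;> ring

lemma wordVec_two : wordVec (2 : ZMod 7) =
    ![![1, 4, 2, 1, 1, 4, 2, 1], ![4, 5, 1, 0, 6, 1, 5, 4], ![3, 1, 4, 4, 4, 0, 4, 5],
      ![5, 1, 1, 6, 6, 4, 4, 3], ![3, 0, 6, 6, 6, 0, 5, 5], ![5, 2, 5, 2, 2, 2, 6, 3],
      ![0, 3, 1, 0, 0, 5, 4, 0], ![3, 3, 1, 6, 6, 6, 2, 5]] := by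
  have h0 : topVec (2 : ZMod 7) = ![1, 4, 2, 1, 1, 4, 2, 1] := by decide
  have h1 : minusMat (2 : ZMod 7) *ᵥ ![1, 4, 2, 1, 1, 4, 2, 1] = ![4, 5, 1, 0, 6, 1, 5, 4] := by
    decide
  have h2 : minusMat (2 : ZMod 7) *ᵥ ![4, 5, 1, 0, 6, 1, 5, 4] = ![3, 1, 4, 4, 4, 0, 4, 5] := by
    decide
  have h3 : plusMat (2 : ZMod 7) *ᵥ ![3, 1, 4, 4, 4, 0, 4, 5] = ![5, 1, 1, 6, 6, 4, 4, 3] := by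
    decide
  have h4 : minusMat (2 : ZMod 7) *ᵥ ![5, 1, 1, 6, 6, 4, 4, 3] = ![3, 0, 6, 6, 6, 0, 5, 5] := by
    decide
  have h5 : minusMat (2 : ZMod 7) *ᵥ ![3, 0, 6, 6, 6, 0, 5, 5] = ![5, 2, 5, 2, 2, 2, 6, 3] := by
    decide
  have h6 : plusMat (2 : ZMod 7) *ᵥ ![3, 0, 6, 6, 6, 0, 5, 5] = ![0, 3, 1, 0, 0, 5, 4, 0] := by
    decide
  have h7 : minusMat (2 : ZMod 7) *ᵥ ![0, 3, 1, 0, 0, 5, 4, 0] = ![3, 3, 1, 6, 6, 6, 2, 5] := by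
    decide
  simp only [wordVec, h0, h1, h2, h3, h4, h5, h6, h7]

lemma det_wordVec_two_ne_zero : (Matrix.of (wordVec (2 : ZMod 7))).det ≠ 0 := by
  have h : Matrix.of (wordVec (2 : ZMod 7)) *
      !![2, 0, 4, 3, 6, 1, 2, 4;
         0, 0, 4, 2, 3, 5, 2, 0;
         1, 0, 0, 0, 0, 6, 5, 6;
         1, 1, 1, 0, 3, 2, 2, 5;
         1, 6, 2, 0, 3, 3, 2, 5;
         6, 0, 0, 0, 6, 1, 1, 2;
         1, 0, 4, 2, 6, 4, 5, 3;
         4, 0, 4, 6, 3, 6, 4, 2] = 1 := by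
    rw [wordVec_two]
    decide
  have : Fact (Nat.Prime 7) := ⟨by norm_num⟩
  exact Matrix.det_ne_zero_of_right_inverse h

/-- Specialising the transcendental `X` to `2` modulo `7` detects that the determinant is
nonzero. -/
lemma det_wordVec_X_ne_zero : (Matrix.of (wordVec (RatFunc.X : RatFunc ℂ))).det ≠ 0 := by
  have hX : (Matrix.of (wordVec (X : ℤ[X]))).det ≠ 0 := by
    intro h
    apply det_wordVec_two_ne_zero
    have h2 := congrArg (eval₂RingHom (Int.castRingHom (ZMod 7)) 2) h
    rw [RingHom.map_det, RingHom.mapMatrix_apply, wordVec_map] at h2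
    simpa using h2
  let g : ℤ[X] →+* RatFunc ℂ :=
    (algebraMap ℂ[X] (RatFunc ℂ)).comp (mapRingHom (Int.castRingHom ℂ))
  have hg : Function.Injective g :=
    (RatFunc.algebraMap_injective ℂ).comp
      (map_injective (Int.castRingHom ℂ) Int.cast_injective)
  have hgX : g X = RatFunc.X := by simp [g, RatFunc.algebraMap_X]
  intro h
  apply hX
  apply hg
  rw [RingHom.map_det, RingHom.mapMatrix_apply, wordVec_map, hgX, h, map_zero]

/-- `topVec` is a cyclic vector for the pair of matrices. -/
lemma eq_top_of_topVec_mem {K : Type*} [Field K] {x : K} (hdet : (Matrix.of (wordVec x)).det ≠ 0)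
    (U : Submodule K (Fin 8 → K)) (hp : ∀ v ∈ U, plusMat x *ᵥ v ∈ U)
    (hm : ∀ v ∈ U, minusMat x *ᵥ v ∈ U) (hv : topVec x ∈ U) : U = ⊤ := by
  have hmem : ∀ i, wordVec x i ∈ U := by
    have h1 := hm _ hv
    have h2 := hm _ h1
    have h3 := hp _ h2
    have h4 := hm _ h3
    have h6 := hp _ h4
    intro i
    fin_cases i
    exacts [hv, h1, h2, h3, h4, hm _ h4, h6, hm _ h6]
  have hli : LinearIndependent K (wordVec x) :=
    Matrix.linearIndependent_rows_of_det_ne_zero hdet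
  rw [eq_top_iff, ← hli.span_eq_top_of_card_eq_finrank (by simp), Submodule.span_le]
  rintro _ ⟨i, rfl⟩
  exact hmem i

/-- The orthogonal complement of `W` for the symmetric bilinear form `⬝ᵥ`. -/
def dotCompl {K : Type*} [Field K] (W : Submodule K (Fin 8 → K)) : Submodule K (Fin 8 → K) where
  carrier := {u | ∀ w ∈ W, u ⬝ᵥ w = 0}
  add_mem' ha hb w hw := by rw [add_dotProduct, ha w hw, hb w hw, add_zero]
  zero_mem' w _ := zero_dotProduct w
  smul_mem' c u hu w hw := by rw [smul_dotProduct, hu w hw, smul_zero]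

lemma mulVec_mem_dotCompl {K : Type*} [Field K] {W : Submodule K (Fin 8 → K)}
    {M : Matrix (Fin 8) (Fin 8) K} (hM : Mᵀ = M) (h : ∀ v ∈ W, M *ᵥ v ∈ W) :
    ∀ u ∈ dotCompl W, M *ᵥ u ∈ dotCompl W := by
  intro u hu w hw
  rw [← vecMul_transpose, hM, ← dotProduct_mulVec]
  exact hu _ (h w hw)

lemma eq_bot_or_eq_top_of_invariant {K : Type*} [Field K] {x : K}
    (hdet : (Matrix.of (wordVec x)).det ≠ 0) (hc : (x^2 + 1) * (x^4 + x^2 + 1) ≠ 0)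
    (W : Submodule K (Fin 8 → K)) (hp : ∀ v ∈ W, plusMat x *ᵥ v ∈ W)
    (hm : ∀ v ∈ W, minusMat x *ᵥ v ∈ W) : W = ⊥ ∨ W = ⊤ := by
  by_cases h : topVec x ∈ dotCompl W
  · left
    have htop : dotCompl W = ⊤ := eq_top_of_topVec_mem hdet _
      (mulVec_mem_dotCompl (plusMat_transpose x) hp)
      (mulVec_mem_dotCompl (minusMat_transpose x) hm) h
    rw [eq_bot_iff]
    intro w hw
    rw [Submodule.mem_bot]
    refine dotProduct_eq_zero w fun u => ?_
    rw [dotProduct_comm]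
    exact (htop ▸ Submodule.mem_top : u ∈ dotCompl W) w hw
  · right
    have h' : ∃ w ∈ W, topVec x ⬝ᵥ w ≠ 0 := by
      by_contra! hcon
      exact h hcon
    obtain ⟨w, hw, hne⟩ := h'
    refine eq_top_of_topVec_mem hdet W hp hm ?_
    have hcub := congrArg (· *ᵥ w) (plusMat_cubic x)
    simp only [← mulVec_mulVec, sub_mulVec, smul_mulVec, one_mulVec, vecMulVec_mulVec] at hcub
    have hmem := hp _ (W.sub_mem (hp _ (hp _ hw)) (W.smul_mem (x^4 * (x^2 + 1)^2) hw))
    rw [hcub, op_smul_eq_smul, smul_smul] at hmem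
    exact (W.smul_mem_iff (mul_ne_zero hc hne)).1 hmem

/-- Let K = ℂ(q) be the field of rational functions in one variable q
over ℂ, and let A₊, A₋ ∈ M₈(K) be the displayed matrices (A₋ obtained from A₊ by
replacing q by q⁻¹ in every entry). Then the only K-subspaces W of K⁸ satisfying
A₊·W ⊆ W and A₋·W ⊆ W are W = 0 and W = K⁸. -/
theorem stmt16 (q : RatFunc ℂ) (hq : q = RatFunc.X)
    (Ap Am : Matrix (Fin 8) (Fin 8) (RatFunc ℂ))
    (hAp : Ap = !![q^3, q^2, q,    0,    1,    0,    0,    0;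
                   q^2, q,   0,    q,    0,    1,    0,    0;
                   q,   0,   q,    1,    0,    0,    1,    0;
                   0,   q,   1,    q⁻¹,  0,    0,    0,    1;
                   1,   0,   0,    0,    q,    1,    q⁻¹,  0;
                   0,   1,   0,    0,    1,    q⁻¹,  0,    q⁻¹;
                   0,   0,   1,    0,    q⁻¹,  0,    q⁻¹,  q⁻¹^2;
                   0,   0,   0,    1,    0,    q⁻¹,  q⁻¹^2, q⁻¹^3])
    (hAm : Am = !![q⁻¹^3, q⁻¹^2, q⁻¹,  0,    1,    0,    0,    0;
                   q⁻¹^2, q⁻¹,   0,    q⁻¹,  0,    1,    0,    0;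
                   q⁻¹,   0,     q⁻¹,  1,    0,    0,    1,    0;
                   0,     q⁻¹,   1,    q,    0,    0,    0,    1;
                   1,     0,     0,    0,    q⁻¹,  1,    q,    0;
                   0,     1,     0,    0,    1,    q,    0,    q;
                   0,     0,     1,    0,    q,    0,    q,    q^2;
                   0,     0,     0,    1,    0,    q,    q^2,  q^3]) :
    ∀ W : Submodule (RatFunc ℂ) (Fin 8 → RatFunc ℂ),
      (∀ v ∈ W, Ap.mulVec v ∈ W) → (∀ v ∈ W, Am.mulVec v ∈ W) →
      W = ⊥ ∨ W = ⊤ := by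
  intro W hp hm
  subst hq
  have hq0 : (RatFunc.X : RatFunc ℂ) ≠ 0 := RatFunc.X_ne_zero
  have hP : plusMat RatFunc.X = (RatFunc.X ^ 3 : RatFunc ℂ) • Ap := by
    rw [hAp]
    ext i j
    fin_cases i <;> fin_cases j <;> simp [plusMat] <;> field_simp
  have hM : minusMat RatFunc.X = (RatFunc.X ^ 3 : RatFunc ℂ) • Am := by
    rw [hAm]
    ext i j
    fin_cases i <;> fin_cases j <;> simp [minusMat] <;> field_simp
  refine eq_bot_or_eq_top_of_invariant det_wordVec_X_ne_zero ?_ W ?_ ?_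
  · have hpoly : ((X ^ 2 + 1) * (X ^ 4 + X ^ 2 + 1) : ℂ[X]) ≠ 0 := by
      intro h
      have := congrArg (eval 1) h
      norm_num at this
    simpa [RatFunc.algebraMap_X] using
      (map_ne_zero_iff _ (RatFunc.algebraMap_injective ℂ)).2 hpoly
  · intro v hv
    rw [hP, smul_mulVec]
    exact W.smul_mem _ (hp v hv)
  · intro v hv
    rw [hM, smul_mulVec]
    exact W.smul_mem _ (hm v hv)
end

section
/- Let q = exp(iπ/4) ∈ ℂ and let α, k₊, k₋ ∈ ℂ. Let A₊ ∈ M₄(ℂ) be the matrix with rows (0, q·k₊, 0, q⁻²·α²·k₋), (q·k₋, 0, 2k₊, 0), (0, k₋, 0, q⁻¹·k₊), (0, 0, q⁻¹·k₋, 0). Then the characteristic polynomial of A₊ equals (X² − (q³·α·k₋² + k₊·k₋)) · (X² − (q⁻¹·α·k₋² + k₊·k₋)). In particular, the eigenvalues of A₊ are ±√(q³αk₋² + k₊k₋) and ±√(q⁻¹αk₋² + k₊k₋). -/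
/-!
Since `q ^ 4 = -1`, we have `q² + q⁻² = 0` and `q³ + q⁻¹ = 0`. Expanding the determinant, the
characteristic polynomial is
`X⁴ - (q² + 2 + q⁻²) k₊k₋ X² + (k₊k₋)² - q⁻²α²k₋⁴ = X⁴ - 2 k₊k₋ X² + (k₊k₋)² + q²α²k₋⁴`,
and the right-hand side of the claim has the same coefficients: the two constants in its factors
have sum `2 k₊k₋` and product `(k₊k₋)² + q²α²k₋⁴`. The roots are read off from the factorization.
-/

open Polynomial

/-- Let q = exp(iπ/4) ∈ ℂ and α, k₊, k₋ ∈ ℂ. Let A₊ ∈ M₄(ℂ) be the matrix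
with rows (0, q·k₊, 0, q⁻²·α²·k₋), (q·k₋, 0, 2k₊, 0), (0, k₋, 0, q⁻¹·k₊),
(0, 0, q⁻¹·k₋, 0). Then the characteristic polynomial of A₊ equals
(X² − (q³·α·k₋² + k₊·k₋)) · (X² − (q⁻¹·α·k₋² + k₊·k₋)). In particular, the eigenvalues
of A₊ are ±√(q³αk₋² + k₊k₋) and ±√(q⁻¹αk₋² + k₊k₋). -/
theorem stmt19 (q α kp km : ℂ) (hq : q = Complex.exp (Real.pi * Complex.I / 4))
    (Ap : Matrix (Fin 4) (Fin 4) ℂ)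
    (hAp : Ap = !![0,      q * kp, 0,        q⁻¹^2 * α^2 * km;
                   q * km, 0,      2 * kp,   0;
                   0,      km,     0,        q⁻¹ * kp;
                   0,      0,      q⁻¹ * km, 0]) :
    Ap.charpoly
      = (Polynomial.X ^ 2 - Polynomial.C (q ^ 3 * α * km ^ 2 + kp * km))
        * (Polynomial.X ^ 2 - Polynomial.C (q⁻¹ * α * km ^ 2 + kp * km)) ∧
    ∀ μ : ℂ, Ap.charpoly.IsRoot μ ↔
      (μ ^ 2 = q ^ 3 * α * km ^ 2 + kp * km ∨ μ ^ 2 = q⁻¹ * α * km ^ 2 + kp * km) := by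
  have h4 : q ^ 4 = -1 := by
    rw [hq, ← Complex.exp_nat_mul, ← Complex.exp_pi_mul_I]
    congr 1
    push_cast
    ring
  -- `q⁻¹ = -q³` makes every entry polynomial in `q`, so only `q ^ 4 = -1` is needed below.
  have hinv : q⁻¹ = -q ^ 3 :=
    inv_eq_of_mul_eq_one_right (by linear_combination -h4)
  have hchar : Ap.charpoly
      = (Polynomial.X ^ 2 - Polynomial.C (q ^ 3 * α * km ^ 2 + kp * km))
        * (Polynomial.X ^ 2 - Polynomial.C (q⁻¹ * α * km ^ 2 + kp * km)) := by
    refine Polynomial.funext fun x => ?_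
    rw [Matrix.eval_charpoly, hAp, hinv]
    simp [Matrix.det_succ_row_zero, Fin.sum_univ_succ, Fin.succAbove]
    linear_combination (-(x ^ 2 * q ^ 2 * kp * km) + q ^ 6 * km ^ 4 * α ^ 2
      + (q ^ 4 - 1) * kp ^ 2 * km ^ 2) * h4
  refine ⟨hchar, fun μ => ?_⟩
  rw [hchar]
  simp only [IsRoot.def, eval_mul, eval_sub, eval_pow, eval_X, eval_C, mul_eq_zero, sub_eq_zero]
end
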